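/- Let S be a nonzero complex number, and let m ≥ 1 and ξ ≥ 1 be integers with ξ ∣ m. Summing over all partitions λ of m all of whose parts are divisible by ξ, and writing c_j(λ) for the multiplicity of j as a part of λ, one has m! · ∑_λ ( ∏_{j≥1} c_j(λ)! · j^{c_j(λ)} )^{−1} · S^{(∑_{j≥1} c_j(λ)) − 1} = (m−1)! · binom( S/ξ + m/ξ − 1, m/ξ − 1 ). -/

import Mathlib

/-- weight of a multiset -/
noncomputable def wt (g : ℕ → ℂ) (s : Multiset ℕ) : ℂ :=
  (s.map g).prod * (∏ j ∈ s.toFinset, ((s.count j).factorial : ℂ))⁻¹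

/-- total weight of the partitions of n -/
noncomputable def totalWt (g : ℕ → ℂ) (n : ℕ) : ℂ :=
  ∑ p : Nat.Partition n, wt g p.parts

lemma prod_fact_subset (s : Multiset ℕ) (T : Finset ℕ) (h : s.toFinset ⊆ T) :
    ∏ j ∈ s.toFinset, ((s.count j).factorial : ℂ) = ∏ j ∈ T, ((s.count j).factorial : ℂ) := by
  apply Finset.prod_subset h
  intro x _ hx
  rw [Multiset.mem_toFinset] at hx
  simp [Multiset.count_eq_zero_of_notMem hx]

lemma wt_cons (g : ℕ → ℂ) (a : ℕ) (s : Multiset ℕ) :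
    ((a ::ₘ s).count a : ℂ) * wt g (a ::ₘ s) = g a * wt g s := by
  unfold wt
  have hT : s.toFinset ⊆ insert a s.toFinset := Finset.subset_insert _ _
  rw [prod_fact_subset s _ hT, Multiset.toFinset_cons,
    ← Finset.mul_prod_erase _ _ (Finset.mem_insert_self a s.toFinset),
    ← Finset.mul_prod_erase _ _ (Finset.mem_insert_self a s.toFinset)]
  have h2 : ∏ x ∈ (insert a s.toFinset).erase a, (((a ::ₘ s).count x).factorial : ℂ)
      = ∏ x ∈ (insert a s.toFinset).erase a, ((s.count x).factorial : ℂ) := by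
    apply Finset.prod_congr rfl
    intro x hx
    rw [Multiset.count_cons_of_ne (Finset.ne_of_mem_erase hx)]
  rw [h2, Multiset.count_cons_self, Multiset.map_cons, Multiset.prod_cons, Nat.factorial_succ]
  have h3 : ((s.count a + 1 : ℕ) : ℂ) ≠ 0 := by exact_mod_cast Nat.succ_ne_zero (s.count a)
  push_cast at h3 ⊢
  rw [mul_inv, mul_inv, mul_inv]
  field_simp

lemma sum_count (g : ℕ → ℂ) (n j : ℕ) (h1 : 1 ≤ j) (hn : j ≤ n) :
    ∑ p : Nat.Partition n, (p.parts.count j : ℂ) * wt g p.parts = g j * totalWt g (n - j) := by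
  classical
  have h : ∑ p : Nat.Partition n, (p.parts.count j : ℂ) * wt g p.parts
      = ∑ p : {p : Nat.Partition n // j ∈ p.parts},
          (p.1.parts.count j : ℂ) * wt g p.1.parts := by
    rw [← Finset.sum_subtype (Finset.univ.filter (fun p : Nat.Partition n => j ∈ p.parts))
      (by simp) (fun p : Nat.Partition n => (p.parts.count j : ℂ) * wt g p.parts)]
    rw [Finset.sum_filter_of_ne]
    intro p _ hp
    by_contra hc
    simp [Multiset.count_eq_zero_of_notMem hc] at hp
  rw [h, ← (Nat.Partition.partitionWithPartEquiv h1 hn).symm.sum_comp, totalWt, Finset.mul_sum]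
  apply Finset.sum_congr rfl
  intro p _
  rw [Nat.Partition.partitionWithPartEquiv_symm_apply_parts, wt_cons]

lemma rec_totalWt (g : ℕ → ℂ) (n : ℕ) :
    (n : ℂ) * totalWt g n
      = ∑ i ∈ Finset.range n, (((n - i : ℕ) : ℂ) * g (n - i)) * totalWt g i := by
  have h : (n : ℂ) * totalWt g n
      = ∑ j ∈ Finset.range n, (((j + 1 : ℕ) : ℂ) * g (j + 1)) * totalWt g (n - (j + 1)) := by
    have e : ∀ j ∈ Finset.range n,
        (((j + 1 : ℕ) : ℂ) * g (j + 1)) * totalWt g (n - (j + 1))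
        = ∑ p : Nat.Partition n, ((j + 1 : ℕ) : ℂ) *
            ((p.parts.count (j + 1) : ℂ) * wt g p.parts) := by
      intro j hj
      rw [mul_assoc, ← sum_count g n (j + 1) (by omega)
        (by have := Finset.mem_range.1 hj; omega), Finset.mul_sum]
    rw [Finset.sum_congr rfl e, Finset.sum_comm, totalWt, Finset.mul_sum]
    apply Finset.sum_congr rfl
    intro p _
    have hs : (n : ℂ) = ∑ j ∈ Finset.range n, ((j + 1 : ℕ) : ℂ) * (p.parts.count (j + 1) : ℂ) := by
      have h1 : p.parts.toFinset ⊆ Finset.range (n + 1) := by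
        intro x hx
        rw [Multiset.mem_toFinset] at hx
        have := Nat.Partition.le_of_mem_parts hx
        simp; omega
      have h2 := Finset.sum_multiset_count_of_subset p.parts _ h1
      rw [p.parts_sum, Finset.sum_range_succ'] at h2
      conv_lhs => rw [h2]
      push_cast
      simp [mul_comm]
    conv_lhs => rw [hs]
    rw [Finset.sum_mul]
    exact Finset.sum_congr rfl fun j _ => by ring
  rw [h, ← Finset.sum_range_reflect]
  apply Finset.sum_congr rfl
  intro i hi
  have := Finset.mem_range.1 hi
  have a : n - 1 - i + 1 = n - i := by omega
  have b : n - (n - i) = i := by omega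
  rw [a, b]

/-- the letter weights -/
noncomputable def gw (S : ℂ) (ξ : ℕ) (j : ℕ) : ℂ := if ξ ∣ j then S / (j : ℂ) else 0

lemma mul_gw (S : ℂ) (ξ j : ℕ) (hj : 1 ≤ j) :
    (j : ℂ) * gw S ξ j = if ξ ∣ j then S else 0 := by
  have : (j : ℂ) ≠ 0 := by exact_mod_cast (by omega : j ≠ 0)
  unfold gw
  split_ifs
  · field_simp
  · simp

lemma step_totalWt (S : ℂ) (ξ n : ℕ) (hξ : 1 ≤ ξ) :
    ((n + ξ : ℕ) : ℂ) * totalWt (gw S ξ) (n + ξ) = (S + n) * totalWt (gw S ξ) n := by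
  rw [rec_totalWt, Finset.sum_range_add, add_mul, rec_totalWt _ n, add_comm]
  congr 1
  · rw [Finset.sum_eq_single 0]
    · rw [mul_gw _ _ _ (by omega)]
      simp
    · intro i hi h0
      have := Finset.mem_range.1 hi
      rw [mul_gw _ _ _ (by omega), if_neg, zero_mul]
      intro hd
      have := Nat.le_of_dvd (by omega) hd
      omega
    · intro h
      simp at h; omega
  · apply Finset.sum_congr rfl
    intro i hi
    have := Finset.mem_range.1 hi
    rw [mul_gw _ _ _ (by omega), mul_gw _ _ _ (by omega)]
    have e : n + ξ - i = (n - i) + ξ := by omega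
    rw [e]
    simp

lemma closed_totalWt (S : ℂ) (ξ k : ℕ) (hξ : 1 ≤ ξ) :
    totalWt (gw S ξ) (ξ * k) * (k.factorial : ℂ) = ∏ i ∈ Finset.range k, (S / ξ + i) := by
  have hx : (ξ : ℂ) ≠ 0 := by exact_mod_cast (by omega : ξ ≠ 0)
  induction k with
  | zero => simp [totalWt, wt]
  | succ k ih =>
    rw [Finset.prod_range_succ, ← ih, Nat.factorial_succ]
    have h := step_totalWt S ξ (ξ * k) hξ
    rw [mul_add, mul_one]
    push_cast at h ⊢
    field_simp
    linear_combination (k.factorial : ℂ) * h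

lemma wt_gw (S : ℂ) (m ξ : ℕ) (p : Nat.Partition m) :
    wt (gw S ξ) p.parts = if ∀ j ∈ p.parts, ξ ∣ j then
      (∏ j ∈ Finset.range (m + 1),
        (((p.parts.count j).factorial : ℂ) * (j : ℂ) ^ (p.parts.count j)))⁻¹ *
            S ^ (Multiset.card p.parts) else 0 := by
  have h1 : p.parts.toFinset ⊆ Finset.range (m + 1) := by
    intro x hx
    rw [Multiset.mem_toFinset] at hx
    have := Nat.Partition.le_of_mem_parts hx
    simp; omega
  split_ifs with h
  · unfold wt
    rw [prod_fact_subset _ _ h1, Finset.prod_mul_distrib, mul_inv]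
    have h2 : p.parts.map (gw S ξ) = p.parts.map (fun j : ℕ => S * (j : ℂ)⁻¹) := by
      apply Multiset.map_congr rfl
      intro j hj
      simp [gw, h j hj, div_eq_mul_inv]
    have h3 : (p.parts.map (fun j : ℕ => (j : ℂ)⁻¹)).prod
        = (∏ j ∈ Finset.range (m + 1), (j : ℂ) ^ (p.parts.count j))⁻¹ := by
      rw [Finset.prod_multiset_map_count, ← Finset.prod_inv_distrib]
      simp only [inv_pow]
      apply Finset.prod_subset h1
      intro x _ hx
      rw [Multiset.mem_toFinset] at hx
      simp [Multiset.count_eq_zero_of_notMem hx]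
    rw [h2, Multiset.prod_map_mul, h3, Multiset.map_const', Multiset.prod_replicate]
    ring
  · push Not at h
    obtain ⟨j, hj, hd⟩ := h
    unfold wt
    rw [Multiset.prod_eq_zero, zero_mul]
    exact Multiset.mem_map.2 ⟨j, hj, by simp [gw, hd]⟩


/-- The generalized binomial coefficient `x(x−1)⋯(x−n+1)/n!`. -/
noncomputable def genBinom (x : ℂ) (n : ℕ) : ℂ :=
  (∏ i ∈ Finset.range n, (x - (i : ℂ))) / (Nat.factorial n : ℂ)

open scoped Classical in
/-- The unnumbered lemma in the proof of Théorème 5.3: summing over partitions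
of `m` all of whose parts are divisible by `ξ`, with `c_j` the multiplicity of
the part `j`,
`m! · ∑ (∏_j c_j!·j^{c_j})⁻¹ · S^{(∑ c_j)−1} = (m−1)! · binom(S/ξ + m/ξ − 1, m/ξ − 1)`. -/
theorem stmt_11 (S : ℂ) (hS : S ≠ 0) (m ξ : ℕ) (hm : 1 ≤ m) (hξ : 1 ≤ ξ)
    (hdvd : ξ ∣ m) :
    (m.factorial : ℂ) *
        ∑ p ∈ Finset.univ.filter (fun p : Nat.Partition m => ∀ j ∈ p.parts, ξ ∣ j),
          (∏ j ∈ Finset.range (m + 1),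
              (((p.parts.count j).factorial : ℂ) * (j : ℂ) ^ (p.parts.count j)))⁻¹ *
            S ^ (Multiset.card p.parts - 1)
      = ((m - 1).factorial : ℂ) *
          genBinom (S / (ξ : ℂ) + ((m / ξ : ℕ) : ℂ) - 1) (m / ξ - 1) := by
  have hx : (ξ : ℂ) ≠ 0 := by exact_mod_cast (by omega : ξ ≠ 0)
  obtain ⟨k, rfl⟩ := hdvd
  have hk : k ≠ 0 := by rintro rfl; simp at hm
  obtain ⟨l, rfl⟩ := Nat.exists_eq_succ_of_ne_zero hk
  rw [Nat.mul_div_cancel_left _ (by omega)]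
  have hc := closed_totalWt S ξ l.succ hξ
  have hsum : S * (∑ p ∈ Finset.univ.filter
        (fun p : Nat.Partition (ξ * l.succ) => ∀ j ∈ p.parts, ξ ∣ j),
          (∏ j ∈ Finset.range (ξ * l.succ + 1),
              (((p.parts.count j).factorial : ℂ) * (j : ℂ) ^ (p.parts.count j)))⁻¹ *
            S ^ (Multiset.card p.parts - 1)) = totalWt (gw S ξ) (ξ * l.succ) := by
    rw [totalWt, Finset.mul_sum, Finset.sum_filter]
    apply Finset.sum_congr rfl
    intro p _
    rw [wt_gw]
    split_ifs
    · have hp : Multiset.card p.parts ≠ 0 := by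
        intro h0
        have h1 := p.parts_sum
        rw [Multiset.card_eq_zero.1 h0] at h1
        simp at h1
        omega
      obtain ⟨c, hc⟩ := Nat.exists_eq_succ_of_ne_zero hp
      rw [hc, Nat.succ_sub_one, pow_succ]
      ring
    · rfl
  rw [← hsum, Finset.prod_range_succ'] at hc
  set T := ∑ p ∈ Finset.univ.filter
        (fun p : Nat.Partition (ξ * l.succ) => ∀ j ∈ p.parts, ξ ∣ j),
          (∏ j ∈ Finset.range (ξ * l.succ + 1),
              (((p.parts.count j).factorial : ℂ) * (j : ℂ) ^ (p.parts.count j)))⁻¹ *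
            S ^ (Multiset.card p.parts - 1) with hT
  have hg : genBinom (S / (ξ : ℂ) + ((l.succ : ℕ) : ℂ) - 1) (l.succ - 1) * (l.factorial : ℂ)
      = ∏ i ∈ Finset.range l, (S / (ξ : ℂ) + ((i + 1 : ℕ) : ℂ)) := by
    have hl : (l.factorial : ℂ) ≠ 0 := by exact_mod_cast l.factorial_ne_zero
    rw [genBinom, Nat.succ_sub_one, div_mul_cancel₀ _ hl, ← Finset.prod_range_reflect]
    apply Finset.prod_congr rfl
    intro i hi
    have := Finset.mem_range.1 hi
    have e : l.succ = (l - 1 - i) + (i + 1) + 1 := by omega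
    rw [e]
    push_cast
    ring
  rw [← hg] at hc
  have hf : ((ξ * l.succ).factorial : ℂ) = (ξ * (l + 1)) * ((ξ * l.succ - 1).factorial : ℂ) := by
    rw [← Nat.mul_factorial_pred (by omega : ξ * l.succ ≠ 0)]
    push_cast
    ring
  rw [hf]
  have hl : (l.factorial : ℂ) ≠ 0 := by exact_mod_cast l.factorial_ne_zero
  rw [Nat.succ_eq_add_one, Nat.factorial_succ] at hc
  have key : (ξ : ℂ) * (l + 1) * T
      = genBinom (S / (ξ : ℂ) + ((l.succ : ℕ) : ℂ) - 1) (l.succ - 1) := by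
    apply mul_left_cancel₀ (mul_ne_zero hS hl)
    rw [Nat.succ_sub_one]
    push_cast at hc ⊢
    rw [add_zero] at hc
    have e : S = ξ * (S / ξ) := by field_simp
    linear_combination (ξ : ℂ) * hc - genBinom (S / (ξ : ℂ) + ((l : ℂ) + 1) - 1) l * (l.factorial : ℂ) * e
  rw [← key]
  ring
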